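/- Let k ≥ 2 and let n_1, …, n_k be integers with n_i ≥ 2 for all i. Then the signed domination number of the complete k-partite graph K_{n_1,…,n_k} satisfies 1 ≤ γ_s(K_{n_1,…,n_k}) ≤ 6. -/

import Mathlib

open scoped Classical

/-- The signed domination number of a finite simple graph `G`: the minimum weight of a
function `f : V → {−1, 1}` such that `f(N[v]) ≥ 1` for every vertex `v`. -/
noncomputable def signedDomNum {V : Type*} [Fintype V] (G : SimpleGraph V) : ℤ :=
  sInf {w : ℤ | ∃ f : V → ℤ, (∀ v, f v = 1 ∨ f v = -1) ∧
    (∀ v, 1 ≤ f v + ∑ u ∈ G.neighborFinset v, f u) ∧ w = ∑ v, f v}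

/-- Summing over the neighbours of `v` in a complete multipartite graph omits the part of `v`. -/
theorem sum_neighborFinset_completeMultipartiteGraph {ι : Type*} [Fintype ι] {V : ι → Type*}
    [∀ i, Fintype (V i)] (f : (Σ i, V i) → ℤ) (v : Σ i, V i)
    [Fintype ((SimpleGraph.completeMultipartiteGraph V).neighborSet v)] :
    ∑ u ∈ (SimpleGraph.completeMultipartiteGraph V).neighborFinset v, f u =
      (∑ i, ∑ x, f ⟨i, x⟩) - ∑ x, f ⟨v.1, x⟩ := by
  have hfilter : (SimpleGraph.completeMultipartiteGraph V).neighborFinset v =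
      Finset.univ.filter fun u => v.1 ≠ u.1 := by
    ext u
    simp [SimpleGraph.completeMultipartiteGraph]
  have hpart : ∀ i, (∑ x, if v.1 ≠ i then f ⟨i, x⟩ else 0) =
      (∑ x, f ⟨i, x⟩) - if v.1 = i then ∑ x, f ⟨i, x⟩ else 0 := by
    intro i
    by_cases h : v.1 = i <;> simp [h]
  rw [hfilter, Finset.sum_filter, Fintype.sum_sigma]
  simp only [hpart, Finset.sum_sub_distrib]
  simp

/-- Every integer `s` with `|s| ≤ n` and `s ≡ n (mod 2)` is a sum of `n` signs. -/
theorem exists_signs_sum_eq (n : ℕ) (s : ℤ) (hlo : -n ≤ s) (hhi : s ≤ n)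
    (hpar : s % 2 = n % 2) :
    ∃ f : Fin n → ℤ, (∀ j, f j = 1 ∨ f j = -1) ∧ ∑ j, f j = s := by
  induction n generalizing s with
  | zero => exact ⟨fun _ => 1, by simp, by simp at *; omega⟩
  | succ n ih =>
    push_cast at hlo hhi hpar
    obtain ⟨c, hc, hclo, hchi⟩ : ∃ c : ℤ, (c = 1 ∨ c = -1) ∧ -n ≤ s - c ∧ s - c ≤ n := by
      by_cases h : 0 ≤ s
      · exact ⟨1, by omega, by omega, by omega⟩
      · exact ⟨-1, by omega, by omega, by omega⟩
    obtain ⟨f, hf, hsum⟩ := ih (s - c) hclo hchi (by omega)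
    refine ⟨Fin.cons c f, fun j => ?_, by simp [Fin.sum_univ_succ, hsum]⟩
    refine Fin.cases ?_ (fun j => ?_) j
    · simpa using hc
    · simpa using hf j

/-- Integers in `{-1, 0, 1}` with prescribed parities can be chosen with sum `0` or `1`. -/
theorem exists_balanced_of_parity (m : ℕ) (n : Fin m → ℕ) :
    ∃ t : Fin m → ℤ, (∀ i, -1 ≤ t i ∧ t i ≤ 1 ∧ t i % 2 = n i % 2) ∧
      (∑ i, t i = 0 ∨ ∑ i, t i = 1) := by
  induction m with
  | zero => exact ⟨fun _ => 0, fun i => i.elim0, by simp⟩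
  | succ m ih =>
    obtain ⟨t, ht, hsum⟩ := ih fun i => n i.succ
    obtain ⟨c, hlo, hhi, hpar, hc⟩ : ∃ c : ℤ, -1 ≤ c ∧ c ≤ 1 ∧ c % 2 = n 0 % 2 ∧
        (c + ∑ i, t i = 0 ∨ c + ∑ i, t i = 1) := by
      by_cases h : n 0 % 2 = 0
      · exact ⟨0, by omega, by omega, by omega, by omega⟩
      · exact ⟨1 - 2 * ∑ i, t i, by omega, by omega, by omega, by omega⟩
    refine ⟨Fin.cons c t, fun i => ?_, by simpa [Fin.sum_univ_succ] using hc⟩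
    refine Fin.cases ?_ (fun i => ?_) i
    · simpa using ⟨hlo, hhi, hpar⟩
    · simpa using ht i

/-- Part sums that yield a signed dominating function of weight at most `6`. -/
theorem exists_part_sums (k : ℕ) (hk : 2 ≤ k) (n : Fin k → ℕ) (hn : ∀ i, 2 ≤ n i) :
    ∃ s : Fin k → ℤ, (∀ i, -n i ≤ s i ∧ s i ≤ n i ∧ s i % 2 = n i % 2 ∧ s i + 2 ≤ ∑ j, s j) ∧
      ∑ j, s j ≤ 6 := by
  obtain ⟨m, rfl⟩ := Nat.exists_eq_add_of_le' hk
  obtain ⟨t, ht, hsum⟩ := exists_balanced_of_parity m fun i => n i.succ.succ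
  have h0 := hn 0
  have h1 := hn (Fin.succ 0)
  obtain ⟨e, he, hbound⟩ : ∃ e : ℤ, (e = 1 ∨ e = -1) ∧
      (n 0 % 2 = 1 ∧ n (Fin.succ 0) % 2 = 1 → -1 ≤ e * ∑ i, t i ∧ e * ∑ i, t i ≤ 0) ∧
      (¬(n 0 % 2 = 1 ∧ n (Fin.succ 0) % 2 = 1) → 0 ≤ e * ∑ i, t i ∧ e * ∑ i, t i ≤ 1) := by
    by_cases h : n 0 % 2 = 1 ∧ n (Fin.succ 0) % 2 = 1
    · exact ⟨-1, by omega, by omega, by omega⟩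
    · exact ⟨1, by omega, by omega, by omega⟩
  have hall : ∑ j, (Fin.cons (2 + (n 0 : ℤ) % 2) (Fin.cons (2 + (n (Fin.succ 0) : ℤ) % 2)
      fun i => e * t i : Fin (m + 1) → ℤ) : Fin (m + 2) → ℤ) j =
      (2 + (n 0 : ℤ) % 2) + ((2 + (n (Fin.succ 0) : ℤ) % 2) + e * ∑ i, t i) := by
    rw [Fin.sum_univ_succ, Fin.sum_univ_succ, Finset.mul_sum]
    simp only [Fin.cons_zero, Fin.cons_succ]
  refine ⟨Fin.cons (2 + (n 0 : ℤ) % 2) (Fin.cons (2 + (n (Fin.succ 0) : ℤ) % 2)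
    fun i => e * t i), fun i => ?_, ?_⟩
  · rw [hall]
    generalize e * ∑ i, t i = r at hbound
    refine Fin.cases ?_ (fun i => Fin.cases ?_ (fun i => ?_) i) i
    · simp only [Fin.cons_zero]
      omega
    · simp only [Fin.cons_zero, Fin.cons_succ]
      omega
    · simp only [Fin.cons_succ]
      have := ht i
      have := hn i.succ.succ
      rcases he with rfl | rfl <;> omega
  · rw [hall]
    omega

/-- A signed dominating function of a complete multipartite graph has positive weight. -/
theorem one_le_sum_of_signed_dominating {k : ℕ} (hk : 2 ≤ k) {n : Fin k → ℕ}
    (hn : ∀ i, 2 ≤ n i) (f : (Σ i : Fin k, Fin (n i)) → ℤ) (hf : ∀ v, f v = 1 ∨ f v = -1)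
    (hdom : ∀ v, 1 ≤ f v + ((∑ i, ∑ x, f ⟨i, x⟩) - ∑ x, f ⟨v.1, x⟩)) :
    1 ≤ ∑ i, ∑ x, f ⟨i, x⟩ := by
  by_contra! hneg
  have hpart : ∀ i, ∑ x, f ⟨i, x⟩ ≤ (∑ i, ∑ x, f ⟨i, x⟩) - 2 := by
    intro i
    by_cases h : ∃ x, f ⟨i, x⟩ = -1
    · obtain ⟨x, hx⟩ := h
      have := hdom ⟨i, x⟩
      dsimp only at this
      omega
    · push Not at h
      have hone : ∀ x, f ⟨i, x⟩ = 1 := fun x => (hf ⟨i, x⟩).resolve_right (h x)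
      have hi := hn i
      have hd := hdom ⟨i, ⟨0, by omega⟩⟩
      have hs : ∑ x, f ⟨i, x⟩ = n i := by simp [hone]
      rw [hone] at hd
      dsimp only at hd
      omega
  have htotal := Finset.sum_le_sum fun i (_ : i ∈ Finset.univ) => hpart i
  rw [Finset.sum_const, Finset.card_univ, Fintype.card_fin, nsmul_eq_mul] at htotal
  have hk' : (2 : ℤ) ≤ k := by exact_mod_cast hk
  nlinarith

theorem signedDomNum_between_one_and_six
    (k : ℕ) (hk : 2 ≤ k) (n : Fin k → ℕ) (hn : ∀ i, 2 ≤ n i) :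
    1 ≤ signedDomNum (SimpleGraph.completeMultipartiteGraph fun i : Fin k => Fin (n i)) ∧
      signedDomNum (SimpleGraph.completeMultipartiteGraph fun i : Fin k => Fin (n i)) ≤ 6 := by
  obtain ⟨s, hs, hle⟩ := exists_part_sums k hk n hn
  choose g hg hgsum using fun i =>
    exists_signs_sum_eq (n i) (s i) (hs i).1 (hs i).2.1 (hs i).2.2.1
  unfold signedDomNum
  simp only [sum_neighborFinset_completeMultipartiteGraph, Fintype.sum_sigma]
  have hlower : ∀ w ∈ {w : ℤ | ∃ f : (Σ i : Fin k, Fin (n i)) → ℤ,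
      (∀ v, f v = 1 ∨ f v = -1) ∧
      (∀ v, 1 ≤ f v + ((∑ i, ∑ x, f ⟨i, x⟩) - ∑ x, f ⟨v.1, x⟩)) ∧
      w = ∑ i, ∑ x, f ⟨i, x⟩}, 1 ≤ w := by
    rintro w ⟨f, hf, hdom, rfl⟩
    exact one_le_sum_of_signed_dominating hk hn f hf hdom
  have hmem : (∑ i, s i) ∈ {w : ℤ | ∃ f : (Σ i : Fin k, Fin (n i)) → ℤ,
      (∀ v, f v = 1 ∨ f v = -1) ∧
      (∀ v, 1 ≤ f v + ((∑ i, ∑ x, f ⟨i, x⟩) - ∑ x, f ⟨v.1, x⟩)) ∧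
      w = ∑ i, ∑ x, f ⟨i, x⟩} := by
    refine ⟨fun v => g v.1 v.2, fun v => hg v.1 v.2, fun v => ?_, by simp only [hgsum]⟩
    simp only [hgsum]
    have := hg v.1 v.2
    have := (hs v.1).2.2.2
    omega
  exact ⟨le_csInf ⟨_, hmem⟩ hlower, (csInf_le ⟨1, hlower⟩ hmem).trans hle⟩
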